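/- The limit of W^(1)[g_n], as n tends to infinity through odd values, equals 2/π. -/

import Mathlib

open Finset

namespace BKS

/-- sign function: 1 if z ≥ 0, -1 otherwise. -/
noncomputable def sgn (z : ℝ) : ℝ := if 0 ≤ z then 1 else -1

/-- encode Bool as the ±1 value of a bit. -/
def chi (b : Bool) : ℝ := if b then 1 else -1

/-- Fourier coefficient of f at S. -/
noncomputable def fourierCoeff {n : ℕ} (f : (Fin n → Bool) → ℝ) (S : Finset (Fin n)) : ℝ :=
  (1 / 2 ^ n : ℝ) * ∑ x : Fin n → Bool, f x * ∏ i ∈ S, chi (x i)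

/-- Fourier weight of f at level k: W^(k)[f]. -/
noncomputable def fourierWeight {n : ℕ} (k : ℕ) (f : (Fin n → Bool) → ℝ) : ℝ :=
  ∑ S ∈ Finset.univ.filter (fun S : Finset (Fin n) => S.card = k), (fourierCoeff f S) ^ 2

/-- Noise stability of f at ρ. -/
noncomputable def noiseStab {n : ℕ} (ρ : ℝ) (f : (Fin n → Bool) → ℝ) : ℝ :=
  ∑ k ∈ Finset.range (n + 1), ρ ^ k * fourierWeight k f

/-- Majority function on n bits. -/
noncomputable def Maj (n : ℕ) : (Fin n → Bool) → ℝ := fun x => sgn (∑ i, chi (x i))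

/-- The function g_n(x) = sgn(2(x_1 + ⋯ + x_{n-3}) + x_{n-2} + x_{n-1} + x_n). -/
noncomputable def gfun (n : ℕ) : (Fin n → Bool) → ℝ :=
  fun x => sgn (∑ i : Fin n, (if (i : ℕ) < n - 3 then (2 : ℝ) else 1) * chi (x i))

/-- f is a linear threshold function. -/
def IsLTF {n : ℕ} (f : (Fin n → Bool) → ℝ) : Prop :=
  ∃ (w0 : ℝ) (w : Fin n → ℝ), ∀ x, f x = sgn (w0 + ∑ i, w i * chi (x i))


lemma sum_insertNth {m : ℕ} (i : Fin (m+1)) (F : (Fin (m+1) → Bool) → ℝ) :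
    ∑ x, F x = ∑ y : Fin m → Bool, (F (i.insertNth true y) + F (i.insertNth false y)) := by
  rw [← (Fin.insertNthEquiv (fun _ => Bool) i).sum_comp, Fintype.sum_prod_type_right]
  apply Finset.sum_congr rfl
  intro y _
  simp [Fin.insertNthEquiv]

lemma sum_append {m l : ℕ} (F : (Fin (m+l) → Bool) → ℝ) :
    ∑ x, F x = ∑ y : Fin m → Bool, ∑ z : Fin l → Bool, F (Fin.append y z) := by
  rw [← (Fin.appendEquiv m l).sum_comp, Fintype.sum_prod_type]
  rfl

lemma sum_chi_insertNth {m : ℕ} (i : Fin (m+1)) (b : Bool) (y : Fin m → Bool) :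
    ∑ j, chi ((i.insertNth b y : Fin (m+1) → Bool) j) = chi b + ∑ j, chi (y j) := by
  rw [Fin.sum_univ_succAbove _ i]
  simp

lemma sum_dist (m : ℕ) : ∀ F : ℝ → ℝ, ∑ x : Fin m → Bool, F (∑ i, chi (x i))
    = ∑ j ∈ range (m+1), (m.choose j : ℝ) * F (2 * j - m) := by
  induction m with
  | zero => intro F; simp
  | succ m ih =>
    intro F
    rw [sum_insertNth 0]
    simp only [sum_chi_insertNth, Finset.sum_add_distrib]
    rw [ih (fun s => F (chi true + s)), ih (fun s => F (chi false + s))]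
    rw [Finset.sum_range_succ' _ (m+1)]
    simp only [Nat.choose_succ_succ, Nat.cast_add, add_mul, Finset.sum_add_distrib]
    rw [add_assoc]
    congr 1
    · apply Finset.sum_congr rfl
      intro j _
      congr 2
      simp [chi]; ring
    · rw [Finset.sum_range_succ' _ m, Finset.sum_range_succ _ m]
      simp only [Nat.choose_succ_self, Nat.cast_zero, zero_mul, add_zero]
      congr 1
      · apply Finset.sum_congr rfl
        intro j _
        congr 2
        simp [chi]; ring
      · simp [chi]

lemma sum_fin3 (F : (Fin 3 → Bool) → ℝ) : ∑ x, F x =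
   F ![true,true,true] + F ![true,true,false] + F ![true,false,true] + F ![true,false,false]
   + F ![false,true,true] + F ![false,true,false] + F ![false,false,true]
   + F ![false,false,false] := by
  have h : (Finset.univ : Finset (Fin 3 → Bool)) = {![true,true,true], ![true,true,false],
    ![true,false,true], ![true,false,false], ![false,true,true], ![false,true,false],
    ![false,false,true], ![false,false,false]} := by decide
  rw [h]
  repeat rw [Finset.sum_insert (by decide)]
  rw [Finset.sum_singleton]; ring

/-- sum over the three light bits -/
noncomputable def H (s : ℝ) : ℝ := ∑ z : Fin 3 → Bool, sgn (2 * s + ∑ j, chi (z j))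

noncomputable def Hj (j : Fin 3) (s : ℝ) : ℝ :=
  ∑ z : Fin 3 → Bool, sgn (2 * s + ∑ j, chi (z j)) * chi (z j)

lemma sgn_pos {z : ℝ} (h : 0 ≤ z) : sgn z = 1 := if_pos h
lemma sgn_neg {z : ℝ} (h : z < 0) : sgn z = -1 := if_neg (not_le.2 h)

lemma H_pos {s : ℝ} (h : 2 ≤ s) : H s = 8 := by
  unfold H; rw [sum_fin3]; simp only [Fin.sum_univ_three]
  simp [chi]
  repeat rw [sgn_pos (by linarith)]
  norm_num
lemma H_neg {s : ℝ} (h : s ≤ -2) : H s = -8 := by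
  unfold H; rw [sum_fin3]; simp only [Fin.sum_univ_three]
  simp [chi]
  repeat rw [sgn_neg (by linarith)]
  norm_num
lemma H_zero : H 0 = 0 := by
  unfold H; rw [sum_fin3]; simp only [Fin.sum_univ_three]
  simp [chi, sgn]
  norm_num
lemma Hj_pos {s : ℝ} (j : Fin 3) (h : 2 ≤ s) : Hj j s = 0 := by
  unfold Hj; rw [sum_fin3]; simp only [Fin.sum_univ_three]
  fin_cases j <;> simp [chi] <;>
  repeat rw [sgn_pos (by linarith)]
  all_goals norm_num
lemma Hj_neg {s : ℝ} (j : Fin 3) (h : s ≤ -2) : Hj j s = 0 := by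
  unfold Hj; rw [sum_fin3]; simp only [Fin.sum_univ_three]
  fin_cases j <;> simp [chi] <;>
  repeat rw [sgn_neg (by linarith)]
  all_goals norm_num
lemma Hj_zero (j : Fin 3) : Hj j 0 = 4 := by
  unfold Hj; rw [sum_fin3]; simp only [Fin.sum_univ_three]
  fin_cases j <;> simp [chi, sgn] <;> norm_num

lemma gfun_append (k : ℕ) (y : Fin (2*k) → Bool) (z : Fin 3 → Bool) :
    gfun (2*k+3) (Fin.append y z) = sgn (2 * ∑ i, chi (y i) + ∑ j, chi (z j)) := by
  unfold gfun
  rw [Fin.sum_univ_add]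
  simp [Finset.mul_sum]

lemma coeff_heavy (K : ℕ) (i : Fin (2*(K+1))) :
    fourierCoeff (gfun (2*(K+1)+3)) {Fin.castAdd 3 i} = (Nat.centralBinom (K+1) : ℝ) / 4^(K+1) := by
  unfold fourierCoeff
  rw [sum_append]
  simp only [Finset.prod_singleton, gfun_append, Fin.append_left, ← Finset.sum_mul]
  change _ * ∑ y : Fin (2*K+1+1) → Bool, H (∑ i, chi (y i)) * chi (y i) = _
  rw [sum_insertNth (m := 2*K+1) i]
  simp only [sum_chi_insertNth, Fin.insertNth_apply_same]
  rw [sum_dist (2*K+1) (fun s => H (chi true + s) * chi true + H (chi false + s) * chi false)]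
  have e : ∀ j ∈ range (2*K+1+1), ((2*K+1).choose j : ℝ) * (H (chi true + (2 * j - (2*K+1:ℕ))) * chi true
      + H (chi false + (2 * j - (2*K+1:ℕ))) * chi false) =
      (if j = K then ((2*K+1).choose K : ℝ) * 8 else 0) +
      (if j = K+1 then ((2*K+1).choose (K+1) : ℝ) * 8 else 0) := by
    intro j _
    have ct : chi true = 1 := by simp [chi]
    have cf : chi false = -1 := by simp [chi]
    have a1 : (1:ℝ) + (2 * j - (2*K+1:ℕ)) = 2 * ((j:ℝ) - K) := by push_cast; ring
    have a2 : (-1:ℝ) + (2 * j - (2*K+1:ℕ)) = 2 * ((j:ℝ) - K - 1) := by push_cast; ring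
    rw [ct, cf, a1, a2]
    rcases lt_trichotomy j K with h | h | h
    · rw [if_neg (by omega), if_neg (by omega)]
      have : (j:ℝ) + 1 ≤ K := by exact_mod_cast h
      rw [H_neg (s := 2 * ((j:ℝ) - K)) (by linarith),
        H_neg (s := 2 * ((j:ℝ) - K - 1)) (by linarith)]
      ring
    · subst h
      rw [if_pos rfl, if_neg (by omega), H_neg (s := 2 * ((j:ℝ) - j - 1)) (by linarith),
        sub_self, mul_zero, H_zero]
      ring
    · rcases Nat.lt_or_ge (K+1) j with h' | h'
      · rw [if_neg (by omega), if_neg (by omega)]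
        have : (K:ℝ) + 1 + 1 ≤ j := by exact_mod_cast h'
        rw [H_pos (s := 2 * ((j:ℝ) - K)) (by linarith),
          H_pos (s := 2 * ((j:ℝ) - K - 1)) (by linarith)]
        ring
      · obtain rfl : j = K+1 := by omega
        rw [if_neg (by omega), if_pos rfl]
        push_cast
        rw [H_pos (s := 2 * ((K:ℝ) + 1 - K)) (by linarith),
          show 2 * ((K:ℝ) + 1 - K - 1) = 0 by ring, H_zero]
        ring
  rw [Finset.sum_congr rfl e, Finset.sum_add_distrib, Finset.sum_ite_eq', Finset.sum_ite_eq',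
    if_pos (by simp; omega), if_pos (by simp; omega)]
  have hc : (Nat.centralBinom (K+1) : ℝ) = (2*K+1).choose K + (2*K+1).choose (K+1) := by
    rw [Nat.centralBinom, show 2*(K+1) = 2*K+1+1 by ring, Nat.choose_succ_succ]; push_cast; rfl
  rw [hc, show (4:ℝ)^(K+1) = 2^(2*(K+1)) by rw [pow_mul]; norm_num, pow_add 2 (2*(K+1)) 3]
  field_simp
  ring

lemma coeff_light (k : ℕ) (i : Fin 3) :
    fourierCoeff (gfun (2*k+3)) {Fin.natAdd (2*k) i} = (Nat.centralBinom k : ℝ) / 4^k / 2 := by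
  unfold fourierCoeff
  rw [sum_append]
  simp only [Finset.prod_singleton, gfun_append, Fin.append_right]
  change _ * ∑ y : Fin (2*k) → Bool, Hj i (∑ i, chi (y i)) = _
  rw [sum_dist, Finset.sum_eq_single k]
  · push_cast
    rw [sub_self, Hj_zero, show (4:ℝ)^k = 2^(2*k) by rw [pow_mul]; norm_num, pow_add,
      Nat.centralBinom]
    field_simp
    ring
  · intro j _ hj
    rcases lt_or_gt_of_ne hj with h | h
    · have : (j:ℝ) + 1 ≤ k := by exact_mod_cast h
      rw [Hj_neg _ (by push_cast; linarith), mul_zero]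
    · have : (k:ℝ) + 1 ≤ j := by exact_mod_cast h
      rw [Hj_pos _ (by push_cast; linarith), mul_zero]
  · intro h; simp at h; omega

lemma weight_one {n : ℕ} (f : (Fin n → Bool) → ℝ) :
    fourierWeight 1 f = ∑ i, fourierCoeff f {i} ^ 2 := by
  unfold fourierWeight
  have : Finset.univ.filter (fun S : Finset (Fin n) => S.card = 1)
      = Finset.univ.map ⟨fun i => ({i} : Finset (Fin n)), Finset.singleton_injective⟩ := by
    ext S; simp [Finset.card_eq_one, eq_comm]
  rw [this, Finset.sum_map]; rfl

lemma weight_formula (k : ℕ) (hk : 1 ≤ k) : fourierWeight 1 (gfun (2*k+3)) =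
    (2 * k + 3/4) * ((Nat.centralBinom k : ℝ) / 4^k)^2 := by
  obtain ⟨K, rfl⟩ : ∃ K, k = K+1 := ⟨k-1, by omega⟩
  rw [weight_one, Fin.sum_univ_add]
  simp only [coeff_heavy, coeff_light, Finset.sum_const, Finset.card_univ, Fintype.card_fin,
    nsmul_eq_mul]
  push_cast
  ring

lemma cb_sq (k : ℕ) : ((Nat.centralBinom k : ℝ) / 4^k)^2 = 1 / (Real.Wallis.W k * (2*k+1)) := by
  rw [Real.Wallis.W_eq_factorial_ratio, Nat.centralBinom_eq_two_mul_choose,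
    Nat.cast_choose ℝ (by omega : k ≤ 2*k), show 2*k-k = k by omega, pow_mul,
    div_pow, ← pow_mul, mul_comm k 2, pow_mul]
  have h1 : ((k.factorial : ℝ)) ≠ 0 := by positivity
  have h2 : (((2*k).factorial : ℝ)) ≠ 0 := by positivity
  norm_num
  field_simp

theorem stmt15 :
    Filter.Tendsto (fun k : ℕ => fourierWeight 1 (gfun (2 * k + 3)))
      Filter.atTop (nhds (2 / Real.pi)) := by
  have h1 : Filter.Tendsto (fun k : ℕ => (1 - (1/4) * (1 / (2*(k:ℝ)+1))) * (Real.Wallis.W k)⁻¹)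
      Filter.atTop (nhds ((1 - (1/4) * 0) * (Real.pi/2)⁻¹)) := by
    refine Filter.Tendsto.mul ?_ (Real.Wallis.tendsto_W_nhds_pi_div_two.inv₀ (by positivity))
    refine tendsto_const_nhds.sub (tendsto_const_nhds.mul ?_)
    simp only [one_div]
    apply Filter.Tendsto.inv_tendsto_atTop
    apply Filter.tendsto_atTop_add_const_right
    exact tendsto_natCast_atTop_atTop.const_mul_atTop (by norm_num)
  have e : (1 - (1/4) * 0) * (Real.pi/2)⁻¹ = 2 / Real.pi := by simp
  rw [e] at h1
  refine h1.congr' ?_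
  filter_upwards [Filter.eventually_ge_atTop 1] with k hk
  rw [weight_formula k hk, cb_sq]
  have := (Real.Wallis.W_pos k).ne'
  have : (2*(k:ℝ)+1) ≠ 0 := by positivity
  field_simp
  ring

end BKS
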